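/- (Local Peierls–Bogoliubov inequality.) Let ρ be a nonsingular d×d density matrix, G a Hermitian d×d matrix, and ᾱ > 0. Then there exists γ ≥ 2 such that the function Γ(α) := D(ρ_G(α), ρ) / α^γ is non-increasing on the interval (0, ᾱ]; that is, for all α₁, α₂ with 0 < α₁ ≤ α₂ ≤ ᾱ, one has D(ρ_G(α₂), ρ)/α₂^γ ≤ D(ρ_G(α₁), ρ)/α₁^γ. -/

import Mathlib

open scoped Matrix ComplexOrder

noncomputable section

/-- The space of `d × d` complex matrices. -/
abbrev Mat (d : ℕ) := Matrix (Fin d) (Fin d) ℂ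

/-- Matrix exponential of a Hermitian matrix, via the real continuous functional calculus
(i.e. the functional calculus on the eigenvalues). -/
noncomputable def mexp {d : ℕ} (A : Mat d) : Mat d := cfc Real.exp A

/-- Matrix logarithm of a positive definite Hermitian matrix, via the real continuous
functional calculus. -/
noncomputable def mlog {d : ℕ} (A : Mat d) : Mat d := cfc Real.log A

/-- A density matrix: Hermitian, positive semidefinite, trace one. -/
def IsDensity {d : ℕ} (ρ : Mat d) : Prop := ρ.PosSemidef ∧ ρ.trace = 1

/-- The real part of the Hilbert–Schmidt inner product `tr (Xᴴ Y)` (which is real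
when `X` and `Y` are Hermitian). -/
noncomputable def hsInner {d : ℕ} (X Y : Mat d) : ℝ := (Matrix.trace (Xᴴ * Y)).re

/-- `tr (σ log σ) = ∑ᵢ λᵢ log λᵢ` over the eigenvalues of `σ` (the convention
`0 log 0 = 0` matches `Real.log 0 = 0`), via the functional calculus for `x ↦ x log x`. -/
noncomputable def trEnt {d : ℕ} (σ : Mat d) : ℝ :=
  (Matrix.trace (cfc (fun x : ℝ => x * Real.log x) σ)).re

/-- The quantum relative entropy `D(σ, ρ) = tr (σ log σ) - tr (σ log ρ)` (for `σ` a
density matrix and `ρ` a nonsingular density matrix). -/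
noncomputable def qRelEnt {d : ℕ} (σ ρ : Mat d) : ℝ :=
  trEnt σ - (Matrix.trace (σ * mlog ρ)).re

/-- The exponentiated-gradient step `ρ_G(α) = c⁻¹ exp (log ρ - α G)` where
`c = tr exp (log ρ - α G)`. -/
noncomputable def egStep {d : ℕ} (ρ G : Mat d) (α : ℝ) : Mat d :=
  (Matrix.trace (mexp (mlog ρ - α • G)))⁻¹ • mexp (mlog ρ - α • G)

/-! The entropy is `D(ρ_G(α), ρ) = α φ'(α) - φ(α)`, where `φ(α) = log tr exp (log ρ - α G)`
is real analytic, and the global Peierls–Bogoliubov inequality says that `φ` lies above its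
tangents; hence `D` is analytic and monotone on `[0, ∞)`. An analytic monotone `D ≥ 0` is either
identically zero or positive on `(0, ᾱ]`. In the second case `α D'(α) / D(α)` extends continuously
to `α = 0`, where its value is the order of vanishing of `D`, so it is bounded on `(0, ᾱ]`, and
`D(α) / α ^ γ` is non-increasing as soon as `γ` exceeds the bound. -/

open Filter Set Topology

section PowerQuotient

variable {f : ℝ → ℝ} {b : ℝ}

theorem antitoneOn_div_rpow_of_mul_deriv_le {s : Set ℝ} {γ : ℝ} (hs : Convex ℝ s)
    (hs_pos : s ⊆ Ioi 0) (hf : ContinuousOn f s) (hf' : DifferentiableOn ℝ f (interior s))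
    (hle : ∀ x ∈ interior s, x * deriv f x ≤ γ * f x) :
    AntitoneOn (fun x ↦ f x / x ^ γ) s := by
  have hderiv : ∀ x ∈ interior s, HasDerivAt (fun x ↦ f x / x ^ γ)
      ((deriv f x * x ^ γ - f x * (γ * x ^ (γ - 1))) / (x ^ γ) ^ 2) x := fun x hx ↦ by
    have hx_pos : 0 < x := hs_pos (interior_subset hx)
    exact (hf'.differentiableAt (isOpen_interior.mem_nhds hx)).hasDerivAt.div
      (Real.hasDerivAt_rpow_const (.inl hx_pos.ne')) (Real.rpow_pos_of_pos hx_pos γ).ne'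
  refine antitoneOn_of_deriv_nonpos hs
    (hf.div (continuousOn_id.rpow_const fun x hx ↦ .inl (hs_pos hx).ne')
      fun x hx ↦ (Real.rpow_pos_of_pos (hs_pos hx) γ).ne')
    (fun x hx ↦ (hderiv x hx).differentiableAt.differentiableWithinAt) fun x hx ↦ ?_
  have hx_pos : 0 < x := hs_pos (interior_subset hx)
  rw [(hderiv x hx).deriv]
  refine div_nonpos_of_nonpos_of_nonneg ?_ (sq_nonneg _)
  calc deriv f x * x ^ γ - f x * (γ * x ^ (γ - 1))
      = x ^ (γ - 1) * (x * deriv f x - γ * f x) := by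
        rw [show x ^ γ = x ^ (γ - 1) * x by rw [← Real.rpow_add_one hx_pos.ne', sub_add_cancel]]
        ring
    _ ≤ 0 := mul_nonpos_of_nonneg_of_nonpos (Real.rpow_nonneg hx_pos.le _)
        (sub_nonpos.2 (hle x hx))

theorem tendsto_sub_mul_logDeriv_of_analyticAt {𝕜 : Type*} [NontriviallyNormedField 𝕜]
    [CompleteSpace 𝕜] {f : 𝕜 → 𝕜} {z₀ : 𝕜} (hf : AnalyticAt 𝕜 f z₀)
    (hf_ne : analyticOrderAt f z₀ ≠ ⊤) :
    Tendsto (fun z ↦ (z - z₀) * logDeriv f z) (𝓝[≠] z₀) (𝓝 (analyticOrderNatAt f z₀ : 𝕜)) := by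
  obtain ⟨g, hg, hg_ne, hfg⟩ := hf.analyticOrderAt_ne_top.1 hf_ne
  set n := analyticOrderNatAt f z₀
  have hlim : Tendsto (fun z ↦ n + (z - z₀) * logDeriv g z) (𝓝[≠] z₀) (𝓝 (n : 𝕜)) := by
    have hcont : ContinuousAt (fun z ↦ n + (z - z₀) * logDeriv g z) z₀ :=
      continuousAt_const.add ((continuousAt_id.sub continuousAt_const).mul
        (hg.deriv.continuousAt.div hg.continuousAt hg_ne))
    simpa using hcont.tendsto.mono_left nhdsWithin_le_nhds
  have hfactor := hfg.eventually_nhds.and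
    ((hg.continuousAt.eventually_ne hg_ne).and hg.eventually_analyticAt)
  refine hlim.congr' ?_
  filter_upwards [hfactor.filter_mono nhdsWithin_le_nhds, self_mem_nhdsWithin]
    with z ⟨hfz, hgz, hgz_an⟩ hz
  have hz_ne : z - z₀ ≠ 0 := sub_ne_zero.2 hz
  have hpow : logDeriv (fun w ↦ (w - z₀) ^ n) z = n / (z - z₀) := by
    rw [logDeriv_fun_pow (by fun_prop), logDeriv_apply, deriv_sub_const, deriv_id'', mul_one_div]
  simp only [smul_eq_mul] at hfz
  rw [(logDeriv_congr_nhds hfz).eq_of_nhds,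
    logDeriv_mul (f := fun w ↦ (w - z₀) ^ n) z (pow_ne_zero n hz_ne) hgz (by fun_prop)
      hgz_an.differentiableAt, hpow, mul_add, mul_div_cancel₀ _ hz_ne]

theorem bddAbove_mul_logDeriv (hf : AnalyticOnNhd ℝ f (Icc 0 b)) (hf_ne : ∀ x ∈ Ioc 0 b, f x ≠ 0) :
    BddAbove ((fun x ↦ x * logDeriv f x) '' Ioc 0 b) := by
  rcases le_or_gt b 0 with hb | hb
  · simp [Ioc_eq_empty hb.not_gt]
  have hf₀ : analyticOrderAt f 0 ≠ ⊤ := fun htop ↦ by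
    have hzero := (analyticOrderAt_eq_top.1 htop).filter_mono (nhdsWithin_le_nhds (s := Ioi 0))
    obtain ⟨x, hx₀, hx⟩ := (hzero.and (Ioc_mem_nhdsGT hb)).exists
    exact hf_ne x hx hx₀
  have hlim : Tendsto (fun x ↦ x * logDeriv f x) (𝓝[≠] 0) (𝓝 (analyticOrderNatAt f 0 : ℝ)) := by
    simpa using tendsto_sub_mul_logDeriv_of_analyticAt (hf 0 (left_mem_Icc.2 hb.le)) hf₀
  have hcont : ContinuousOn
      (Function.update (fun x ↦ x * logDeriv f x) 0 (analyticOrderNatAt f 0 : ℝ)) (Icc 0 b) := by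
    rw [continuousOn_update_iff, Icc_sdiff_left]
    refine ⟨continuousOn_id.mul ?_, fun _ ↦ hlim.mono_left (nhdsWithin_mono _ fun x hx ↦ hx.1.ne')⟩
    exact (hf.deriv.continuousOn.mono Ioc_subset_Icc_self).div
      (hf.continuousOn.mono Ioc_subset_Icc_self) hf_ne
  refine (isCompact_Icc.bddAbove_image hcont).mono ?_
  rintro _ ⟨x, hx, rfl⟩
  exact ⟨x, Ioc_subset_Icc_self hx, Function.update_of_ne hx.1.ne' _ _⟩

theorem eqOn_zero_or_pos_of_monotoneOn (hf : AnalyticOnNhd ℝ f (Icc 0 b))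
    (hf_mono : MonotoneOn f (Icc 0 b)) (hf₀ : 0 ≤ f 0) :
    EqOn f 0 (Icc 0 b) ∨ ∀ x ∈ Ioc 0 b, 0 < f x := by
  have hf_nonneg : ∀ x ∈ Icc 0 b, 0 ≤ f x := fun x hx ↦
    hf₀.trans (hf_mono (left_mem_Icc.2 (hx.1.trans hx.2)) hx hx.1)
  refine or_iff_not_imp_right.2 fun hpos ↦ ?_
  push Not at hpos
  obtain ⟨c, hc, hfc⟩ := hpos
  have hzero : ∀ᶠ x in 𝓝[>] (0 : ℝ), f x = 0 := by
    filter_upwards [Ioo_mem_nhdsGT hc.1] with x hx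
    have hx_mem : x ∈ Icc 0 b := ⟨hx.1.le, hx.2.le.trans hc.2⟩
    exact le_antisymm ((hf_mono hx_mem (Ioc_subset_Icc_self hc) hx.2.le).trans hfc)
      (hf_nonneg x hx_mem)
  exact hf.eqOn_zero_of_preconnected_of_frequently_eq_zero isPreconnected_Icc
    (left_mem_Icc.2 (hc.1.le.trans hc.2))
    (hzero.frequently.filter_mono (nhdsWithin_mono _ fun x hx ↦ ne_of_gt hx))

theorem eventually_antitoneOn_div_rpow (hf : AnalyticOnNhd ℝ f (Icc 0 b))
    (hf_mono : MonotoneOn f (Icc 0 b)) (hf₀ : 0 ≤ f 0) :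
    ∀ᶠ γ : ℝ in atTop, AntitoneOn (fun x ↦ f x / x ^ γ) (Ioc 0 b) := by
  rcases eqOn_zero_or_pos_of_monotoneOn hf hf_mono hf₀ with hzero | hpos
  · refine .of_forall fun γ x hx y hy _ ↦ ?_
    simp [hzero (Ioc_subset_Icc_self hx), hzero (Ioc_subset_Icc_self hy)]
  obtain ⟨C, hC⟩ := bddAbove_mul_logDeriv hf fun x hx ↦ (hpos x hx).ne'
  filter_upwards [eventually_ge_atTop C] with γ hγ
  have hf_diff : DifferentiableOn ℝ f (Ioc 0 b) :=
    hf.differentiableOn.mono Ioc_subset_Icc_self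
  refine antitoneOn_div_rpow_of_mul_deriv_le (convex_Ioc 0 b) (fun x hx ↦ hx.1)
    hf_diff.continuousOn (hf_diff.mono interior_subset) fun x hx ↦ ?_
  have hx := interior_subset hx
  rw [← div_le_iff₀ (hpos x hx), mul_div_assoc]
  exact (hC (mem_image_of_mem _ hx)).trans hγ

end PowerQuotient

section Subgradient

variable {φ g : ℝ → ℝ}

theorem deriv_eq_of_subgradient {a c : ℝ} (hφ : DifferentiableAt ℝ φ a)
    (hc : ∀ b, φ a + (b - a) * c ≤ φ b) : deriv φ a = c := by
  have hmin : IsLocalMin (fun b ↦ φ b - (b - a) * c) a :=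
    Eventually.of_forall fun b ↦ by linarith [hc b]
  have hderiv : HasDerivAt (fun b ↦ φ b - (b - a) * c) (deriv φ a - 1 * c) a :=
    hφ.hasDerivAt.sub (((hasDerivAt_id a).sub_const a).mul_const c)
  linarith [hmin.hasDerivAt_eq_zero hderiv]

theorem monotoneOn_mul_sub_of_subgradient (hg : ∀ a b, φ a + (b - a) * g a ≤ φ b) :
    MonotoneOn (fun x ↦ x * g x - φ x) (Ici 0) := by
  intro a ha b _ hab
  have hg_mono : 0 ≤ a * (g b - g a) := by
    rcases hab.eq_or_lt with rfl | hlt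
    · simp
    · exact mul_nonneg ha (by nlinarith [hg a b, hg b a])
  change a * g a - φ a ≤ b * g b - φ b
  linarith [hg b a]

theorem eventually_antitoneOn_mul_sub_div_rpow (hφ : AnalyticOnNhd ℝ φ univ) (hφ₀ : φ 0 ≤ 0)
    (hg : ∀ a b, φ a + (b - a) * g a ≤ φ b) (b : ℝ) :
    ∀ᶠ γ : ℝ in atTop, AntitoneOn (fun x ↦ (x * g x - φ x) / x ^ γ) (Ioc 0 b) := by
  have hg_deriv : deriv φ = g :=
    funext fun a ↦ deriv_eq_of_subgradient (hφ a (mem_univ a)).differentiableAt (hg a)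
  have hg_an : AnalyticOnNhd ℝ g univ := hg_deriv ▸ hφ.deriv
  refine eventually_antitoneOn_div_rpow (((analyticOnNhd_id.mul hg_an).sub hφ).mono (subset_univ _))
    ((monotoneOn_mul_sub_of_subgradient hg).mono Icc_subset_Ici_self) ?_
  simpa using hφ₀

end Subgradient

section Trace

theorem isHermitian_add_smul {n 𝕜 : Type*} [RCLike 𝕜] {A B : Matrix n n 𝕜} (hA : A.IsHermitian)
    (hB : B.IsHermitian) (t : ℝ) : (A + t • B).IsHermitian :=
  hA.add (hB.smul (.all t))

variable {n 𝕜 : Type*} [Fintype n] [DecidableEq n] [RCLike 𝕜] {A B : Matrix n n 𝕜}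

theorem trace_cfc (hA : A.IsHermitian) (f : ℝ → ℝ) :
    (cfc f A).trace = ((∑ i, f (hA.eigenvalues i) : ℝ) : 𝕜) := by
  rw [hA.cfc_eq, Matrix.IsHermitian.cfc, Unitary.conjStarAlgAut_apply, Matrix.trace_mul_comm,
    ← mul_assoc, Unitary.coe_star_mul_self, one_mul, Matrix.trace_diagonal, RCLike.ofReal_sum]
  rfl

/-- The squared moduli of the inner products of the eigenvectors of `A` with those of `B`: the
weights of the joint distribution of eigenvalues through which traces `tr (f(A) g(B))` are
computed. -/
def eigenOverlap (hA : A.IsHermitian) (hB : B.IsHermitian) (i j : n) : ℝ :=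
  ‖((hA.eigenvectorUnitary : Matrix n n 𝕜)ᴴ * hB.eigenvectorUnitary) i j‖ ^ 2

theorem eigenOverlap_nonneg (hA : A.IsHermitian) (hB : B.IsHermitian) (i j : n) :
    0 ≤ eigenOverlap hA hB i j := sq_nonneg _

theorem trace_cfc_mul_cfc (hA : A.IsHermitian) (hB : B.IsHermitian) (f g : ℝ → ℝ) :
    (cfc f A * cfc g B).trace = ((∑ p : n × n, eigenOverlap hA hB p.1 p.2 *
      (f (hA.eigenvalues p.1) * g (hB.eigenvalues p.2)) : ℝ) : 𝕜) := by
  set U : Matrix n n 𝕜 := ↑hA.eigenvectorUnitary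
  set V : Matrix n n 𝕜 := ↑hB.eigenvectorUnitary
  set D := Matrix.diagonal fun i ↦ (f (hA.eigenvalues i) : 𝕜)
  set E := Matrix.diagonal fun j ↦ (g (hB.eigenvalues j) : 𝕜)
  have hfA : cfc f A = U * D * Uᴴ := by
    rw [hA.cfc_eq, Matrix.IsHermitian.cfc, Unitary.conjStarAlgAut_apply]; rfl
  have hgB : cfc g B = V * E * Vᴴ := by
    rw [hB.cfc_eq, Matrix.IsHermitian.cfc, Unitary.conjStarAlgAut_apply]; rfl
  calc (cfc f A * cfc g B).trace
      = (D * (Uᴴ * V) * (E * (Uᴴ * V)ᴴ)).trace := by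
        rw [hfA, hgB, Matrix.conjTranspose_mul, Matrix.conjTranspose_conjTranspose,
          mul_assoc U, mul_assoc U, Matrix.trace_mul_comm U]
        simp only [mul_assoc]
    _ = _ := by
        simp only [Matrix.trace, Matrix.diag_apply, Matrix.mul_apply (M := D * (Uᴴ * V)),
          Fintype.sum_prod_type, RCLike.ofReal_sum]
        refine Finset.sum_congr rfl fun i _ ↦ Finset.sum_congr rfl fun j _ ↦ ?_
        rw [Matrix.diagonal_mul, Matrix.diagonal_mul, Matrix.conjTranspose_apply, eigenOverlap,
          mul_mul_mul_comm, RCLike.star_def, RCLike.mul_conj]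
        push_cast
        ring

end Trace

section Gibbs

variable {n 𝕜 : Type*} [Fintype n] [DecidableEq n] [RCLike 𝕜] {A B : Matrix n n 𝕜}

/-- The log-partition function `log tr exp A` of a Hermitian matrix `A`. -/
def logPartition (A : Matrix n n 𝕜) : ℝ := Real.log (RCLike.re (cfc Real.exp A).trace)

/-- The Gibbs state `exp A / tr exp A` of a Hermitian matrix `A`; here `A` stands for minus the
Hamiltonian of statistical mechanics. -/
def gibbsState (A : Matrix n n 𝕜) : Matrix n n 𝕜 := (cfc Real.exp A).trace⁻¹ • cfc Real.exp A

theorem continuousOn_spectrum (A : Matrix n n 𝕜) (f : ℝ → ℝ) : ContinuousOn f (spectrum ℝ A) :=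
  A.finite_real_spectrum.continuousOn f

theorem re_trace_exp_pos [Nonempty n] (hA : A.IsHermitian) :
    0 < RCLike.re (cfc Real.exp A).trace := by
  rw [trace_cfc hA, RCLike.ofReal_re]
  exact Finset.sum_pos (fun i _ ↦ Real.exp_pos _) Finset.univ_nonempty

theorem exp_logPartition [Nonempty n] (hA : A.IsHermitian) :
    Real.exp (logPartition A) = RCLike.re (cfc Real.exp A).trace :=
  Real.exp_log (re_trace_exp_pos hA)

theorem gibbsState_eq_cfc [Nonempty n] (hA : A.IsHermitian) :
    gibbsState A = cfc (fun x ↦ Real.exp (x - logPartition A)) A := by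
  have htrace : (cfc Real.exp A).trace = (Real.exp (logPartition A) : 𝕜) := by
    rw [exp_logPartition hA, trace_cfc hA, RCLike.ofReal_re]
  simp only [sub_eq_neg_add, Real.exp_add]
  rw [gibbsState, htrace, ← RCLike.ofReal_inv, ← Real.exp_neg,
    cfc_const_mul _ _ A (continuousOn_spectrum A _), RCLike.real_smul_eq_coe_smul (K := 𝕜)]

theorem trace_gibbsState [Nonempty n] (hA : A.IsHermitian) : (gibbsState A).trace = 1 := by
  rw [gibbsState, Matrix.trace_smul, smul_eq_mul, inv_mul_cancel₀]
  exact fun h ↦ (re_trace_exp_pos hA).ne' (by rw [h, map_zero])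

/-- The joint distribution of an eigenvalue of `A` and one of `B` in the Gibbs state of `A`, as
weights on pairs of eigenvector indices. -/
def gibbsWeight (hA : A.IsHermitian) (hB : B.IsHermitian) (p : n × n) : ℝ :=
  eigenOverlap hA hB p.1 p.2 * Real.exp (hA.eigenvalues p.1 - logPartition A)

theorem sum_gibbsWeight_mul [Nonempty n] (hA : A.IsHermitian) (hB : B.IsHermitian)
    (f g : ℝ → ℝ) :
    ∑ p, gibbsWeight hA hB p * (f (hA.eigenvalues p.1) * g (hB.eigenvalues p.2)) =
      RCLike.re (gibbsState A * (cfc f A * cfc g B)).trace := by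
  rw [gibbsState_eq_cfc hA, ← mul_assoc,
    ← cfc_mul _ f A (continuousOn_spectrum A _) (continuousOn_spectrum A _),
    trace_cfc_mul_cfc hA hB, RCLike.ofReal_re]
  exact Finset.sum_congr rfl fun p _ ↦ by rw [gibbsWeight]; ring

theorem sum_gibbsWeight [Nonempty n] (hA : A.IsHermitian) (hB : B.IsHermitian) :
    ∑ p, gibbsWeight hA hB p = 1 := by
  simpa only [cfc_const_one ℝ A hA.isSelfAdjoint, cfc_const_one ℝ B hB.isSelfAdjoint, mul_one,
    trace_gibbsState hA, RCLike.one_re] using sum_gibbsWeight_mul hA hB (fun _ ↦ 1) (fun _ ↦ 1)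

theorem sum_gibbsWeight_mul_sub [Nonempty n] (hA : A.IsHermitian) (hB : B.IsHermitian) :
    ∑ p, gibbsWeight hA hB p * (hB.eigenvalues p.2 - hA.eigenvalues p.1) =
      RCLike.re (gibbsState A * (B - A)).trace := by
  have hmean_A := sum_gibbsWeight_mul hA hB (fun x ↦ x) (fun _ ↦ 1)
  have hmean_B := sum_gibbsWeight_mul hA hB (fun _ ↦ 1) (fun x ↦ x)
  simp only [cfc_const_one ℝ B hB.isSelfAdjoint, cfc_id' ℝ A hA.isSelfAdjoint, mul_one] at hmean_A
  simp only [cfc_const_one ℝ A hA.isSelfAdjoint, cfc_id' ℝ B hB.isSelfAdjoint, one_mul] at hmean_B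
  simp only [mul_sub, Finset.sum_sub_distrib, hmean_A, hmean_B, Matrix.trace_sub, map_sub]

theorem sum_gibbsWeight_mul_exp_sub [Nonempty n] (hA : A.IsHermitian) (hB : B.IsHermitian) :
    ∑ p, gibbsWeight hA hB p * Real.exp (hB.eigenvalues p.2 - hA.eigenvalues p.1) =
      Real.exp (logPartition B - logPartition A) := by
  have htrace : Real.exp (logPartition B) =
      ∑ p : n × n, eigenOverlap hA hB p.1 p.2 * Real.exp (hB.eigenvalues p.2) := by
    simpa only [cfc_const_one ℝ A hA.isSelfAdjoint, one_mul, RCLike.ofReal_re,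
      ← exp_logPartition hB] using
      congrArg RCLike.re (trace_cfc_mul_cfc hA hB (fun _ ↦ 1) Real.exp)
  rw [Real.exp_sub, htrace, Finset.sum_div]
  refine Finset.sum_congr rfl fun p _ ↦ ?_
  rw [gibbsWeight, mul_assoc, ← Real.exp_add, mul_div_assoc, ← Real.exp_sub]
  ring_nf

/-- The **Peierls–Bogoliubov inequality**. -/
theorem logPartition_add_re_trace_gibbsState_le [Nonempty n] (hA : A.IsHermitian)
    (hB : B.IsHermitian) :
    logPartition A + RCLike.re (gibbsState A * (B - A)).trace ≤ logPartition B := by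
  have hweight (p : n × n) : 0 ≤ gibbsWeight hA hB p :=
    mul_nonneg (eigenOverlap_nonneg hA hB _ _) (Real.exp_pos _).le
  have hjensen := convexOn_exp.map_sum_le (fun p _ ↦ hweight p) (sum_gibbsWeight hA hB)
    fun p _ ↦ mem_univ (hB.eigenvalues p.2 - hA.eigenvalues p.1)
  simp only [smul_eq_mul] at hjensen
  rw [sum_gibbsWeight_mul_sub, sum_gibbsWeight_mul_exp_sub, Real.exp_le_exp] at hjensen
  linarith

theorem re_trace_cfc_mul_log_gibbsState [Nonempty n] (hA : A.IsHermitian) :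
    RCLike.re (cfc (fun x ↦ x * Real.log x) (gibbsState A)).trace =
      RCLike.re (gibbsState A * A).trace - logPartition A := by
  have hA' : IsSelfAdjoint A := hA
  have hentropy : cfc (fun x ↦ x * Real.log x) (gibbsState A) =
      gibbsState A * (A - logPartition A • 1) := by
    rw [gibbsState_eq_cfc hA, ← cfc_comp' _ _ A
      ((A.finite_real_spectrum.image _).continuousOn _) (continuousOn_spectrum A _)]
    simp only [Real.log_exp]
    rw [cfc_mul _ _ A (continuousOn_spectrum A _) (continuousOn_spectrum A _),
      cfc_sub _ _ A (continuousOn_spectrum A _) (continuousOn_spectrum A _), cfc_id' ℝ A,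
      cfc_const _ A, Algebra.algebraMap_eq_smul_one]
  rw [hentropy, mul_sub, Matrix.trace_sub, map_sub, mul_smul_comm, mul_one, Matrix.trace_smul,
    trace_gibbsState hA, RCLike.smul_re, RCLike.one_re, mul_one]

open scoped Matrix.Norms.L2Operator in
theorem cfc_exp_eq_exp (hA : A.IsHermitian) : cfc Real.exp A = NormedSpace.exp A := by
  let : NormedAlgebra ℝ (Matrix n n 𝕜) :=
    { norm_smul_le r X := by
        rw [RCLike.real_smul_eq_coe_smul (K := 𝕜), Real.norm_eq_abs, ← RCLike.norm_ofReal (K := 𝕜)]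
        exact norm_smul_le _ _ }
  exact CFC.real_exp_eq_normedSpace_exp hA.isSelfAdjoint

open scoped Matrix.Norms.Operator in
theorem analyticOnNhd_re_trace_exp_add_smul (A B : Matrix n n 𝕜) :
    AnalyticOnNhd ℝ (fun t : ℝ ↦ RCLike.re (NormedSpace.exp (A + t • B)).trace) univ := by
  intro t _
  let reTrace : Matrix n n 𝕜 →L[ℝ] ℝ :=
    LinearMap.toContinuousLinearMap (RCLike.reLm ∘ₗ Matrix.traceLinearMap n ℝ 𝕜)
  have hline : AnalyticAt ℝ (fun t : ℝ ↦ A + t • B) t := by fun_prop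
  exact (reTrace.analyticAt _).comp ((NormedSpace.exp_analytic (𝕂 := ℝ) _).comp hline)

theorem analyticOnNhd_logPartition_add_smul [Nonempty n] (hA : A.IsHermitian)
    (hB : B.IsHermitian) : AnalyticOnNhd ℝ (fun t : ℝ ↦ logPartition (A + t • B)) univ := by
  have hline := isHermitian_add_smul hA hB
  have htrace := analyticOnNhd_re_trace_exp_add_smul A B
  simp only [← cfc_exp_eq_exp (hline _)] at htrace
  exact fun t ht ↦ (htrace t ht).log (re_trace_exp_pos (hline t))

theorem eventually_antitoneOn_gibbsState_div_rpow [Nonempty n] (hA : A.IsHermitian)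
    (hB : B.IsHermitian) (hA_nonpos : logPartition A ≤ 0) (b : ℝ) :
    ∀ᶠ γ : ℝ in atTop, AntitoneOn (fun t : ℝ ↦
      (t * RCLike.re (gibbsState (A + t • B) * B).trace - logPartition (A + t • B)) / t ^ γ)
      (Ioc 0 b) := by
  refine eventually_antitoneOn_mul_sub_div_rpow (analyticOnNhd_logPartition_add_smul hA hB)
    (by simpa using hA_nonpos) (fun s t ↦ ?_) b
  have hPB := logPartition_add_re_trace_gibbsState_le
    (isHermitian_add_smul hA hB s) (isHermitian_add_smul hA hB t)
  rwa [add_sub_add_left_eq_sub, ← sub_smul, mul_smul_comm, Matrix.trace_smul, RCLike.smul_re]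
    at hPB

end Gibbs

section RelativeEntropy

variable {d : ℕ} {ρ G : Mat d}

theorem isHermitian_mlog (ρ : Mat d) : (mlog ρ).IsHermitian :=
  cfc_predicate (p := IsSelfAdjoint) Real.log ρ

open scoped Matrix.Norms.L2Operator MatrixOrder in
theorem mexp_mlog (hρ : ρ.PosDef) : mexp (mlog ρ) = ρ := by
  rw [mexp, cfc_exp_eq_exp (isHermitian_mlog ρ)]
  exact CFC.exp_log ρ hρ.isStrictlyPositive

theorem qRelEnt_gibbsState [NeZero d] {A : Mat d} (hA : A.IsHermitian) (ρ : Mat d) :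
    qRelEnt (gibbsState A) ρ = (gibbsState A * (A - mlog ρ)).trace.re - logPartition A := by
  have hentropy : trEnt (gibbsState A) = (gibbsState A * A).trace.re - logPartition A :=
    re_trace_cfc_mul_log_gibbsState hA
  rw [qRelEnt, hentropy, mul_sub, Matrix.trace_sub, Complex.sub_re]
  ring

theorem egStep_eq_gibbsState (ρ G : Mat d) (α : ℝ) :
    egStep ρ G α = gibbsState (mlog ρ + α • -G) := by
  rw [smul_neg, ← sub_eq_add_neg]
  rfl

theorem qRelEnt_egStep [NeZero d] (ρ : Mat d) (hG : G.IsHermitian) (α : ℝ) :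
    qRelEnt (egStep ρ G α) ρ =
      α * (gibbsState (mlog ρ + α • -G) * -G).trace.re - logPartition (mlog ρ + α • -G) := by
  rw [egStep_eq_gibbsState, qRelEnt_gibbsState (isHermitian_add_smul (isHermitian_mlog ρ) hG.neg α),
    add_sub_cancel_left, mul_smul_comm, Matrix.trace_smul, Complex.smul_re, smul_eq_mul]

end RelativeEntropy

theorem stmt_10_general {d : ℕ} (hd : 0 < d) (ρ G : Mat d) (hρ : ρ.PosDef) (hρ1 : ρ.trace ≤ 1)
    (hG : G.IsHermitian) (abar : ℝ) :
    ∀ᶠ γ : ℝ in atTop, AntitoneOn (fun α ↦ qRelEnt (egStep ρ G α) ρ / α ^ γ) (Ioc 0 abar) := by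
  have : NeZero d := ⟨hd.ne'⟩
  have hρ_log : logPartition (mlog ρ) ≤ 0 := by
    have htrace : logPartition (mlog ρ) = Real.log ρ.trace.re :=
      congrArg (fun A : Mat d ↦ Real.log A.trace.re) (mexp_mlog hρ)
    rw [htrace]
    exact Real.log_nonpos (Complex.nonneg_iff.1 hρ.posSemidef.trace_nonneg).1
      (Complex.le_def.1 hρ1).1
  simp only [qRelEnt_egStep ρ hG]
  exact eventually_antitoneOn_gibbsState_div_rpow (isHermitian_mlog ρ) hG.neg hρ_log abar

/-- local Peierls–Bogoliubov inequality: there is some `γ ≥ 2` such that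
`α ↦ D(ρ_G(α), ρ) / α ^ γ` is non-increasing on `(0, ᾱ]`. -/
theorem stmt_10 {d : ℕ} (hd : 0 < d) (ρ G : Mat d) (hρ : ρ.PosDef) (hρ1 : ρ.trace = 1)
    (hG : G.IsHermitian) (abar : ℝ) (habar : 0 < abar) :
    ∃ γ : ℝ, 2 ≤ γ ∧
      ∀ α₁ α₂ : ℝ, 0 < α₁ → α₁ ≤ α₂ → α₂ ≤ abar →
        qRelEnt (egStep ρ G α₂) ρ / α₂ ^ γ ≤ qRelEnt (egStep ρ G α₁) ρ / α₁ ^ γ := by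
  obtain ⟨γ, hγ, hγ2⟩ :=
    ((stmt_10_general hd ρ G hρ hρ1.le hG abar).and (eventually_ge_atTop 2)).exists
  exact ⟨γ, hγ2, fun α₁ α₂ h1 h12 h2 ↦ hγ ⟨h1, h12.trans h2⟩ ⟨h1.trans_le h12, h2⟩ h12⟩

end
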